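/- arXiv:2408.01517 — 5 statements merged into one kernel-verified Lean document; each statement's English description precedes it below -/
import Mathlib

section
/- Let y, x₀ ∈ ℝ^{QN}, let P : [0,1) → ℝ^{QN×QN} be continuous, and let x̃ : [0,1) → ℝ^{QN} be differentiable with x̃(0) = x₀ and ∂_t x̃(t) = −(1/(1−t)) P(t)(x̃(t) − y) for all t ∈ [0,1). Define R(t) := (x̃(t) − ((1−t)x₀ + t y))/(1−t). Then R(0) = 0 and R satisfies the linear inhomogeneous ODE ∂_t R(t) = (1/(1−t))(I − P(t)) R(t) + (1/(1−t))(I − P(t))(x₀ − y) for all t ∈ [0,1). -/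
open Matrix

/-- If x̃ solves ∂_t x̃ = −(1/(1−t)) P(t)(x̃(t) − y) on [0,1) with x̃(0) = x₀,
then R(t) := (x̃(t) − ((1−t)x₀ + t y))/(1−t) satisfies R(0) = 0 and the linear
inhomogeneous ODE ∂_t R = (1/(1−t))(I − P(t)) R + (1/(1−t))(I − P(t))(x₀ − y). -/
theorem stmt_8 (d : ℕ) (y x₀ : Fin d → ℝ)
    (P : ℝ → Matrix (Fin d) (Fin d) ℝ) (hP : ContinuousOn P (Set.Ico 0 1))
    (xt : ℝ → Fin d → ℝ) (hx0 : xt 0 = x₀)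
    (hode : ∀ t ∈ Set.Ico (0 : ℝ) 1,
      HasDerivWithinAt xt (-((1 / (1 - t)) • (P t *ᵥ (xt t - y)))) (Set.Ico 0 1) t)
    (R : ℝ → Fin d → ℝ)
    (hR : ∀ t, R t = (1 / (1 - t)) • (xt t - ((1 - t) • x₀ + t • y))) :
    R 0 = 0 ∧
    ∀ t ∈ Set.Ico (0 : ℝ) 1,
      HasDerivWithinAt R
        ((1 / (1 - t)) • ((1 - P t) *ᵥ R t) +
          (1 / (1 - t)) • ((1 - P t) *ᵥ (x₀ - y)))
        (Set.Ico 0 1) t := by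
  have key : ∀ t ∈ Set.Ico (0 : ℝ) 1, R t = (1 - t)⁻¹ • (xt t - y) - (x₀ - y) := by
    intro t ht
    have h : (1 - t) ≠ 0 := by have := ht.2; linarith
    rw [hR]
    ext i
    simp only [Pi.smul_apply, Pi.sub_apply, Pi.add_apply, smul_eq_mul]
    field_simp
    ring
  refine ⟨?_, ?_⟩
  · rw [hR]; simp [hx0]
  · intro t ht
    have h : (1 - t) ≠ 0 := by have := ht.2; linarith
    have h1 : HasDerivWithinAt (fun s : ℝ => (1 - s)⁻¹) (-(-1) / (1 - t) ^ 2) (Set.Ico 0 1) t :=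
      ((hasDerivWithinAt_id t _).const_sub 1).fun_inv h
    have h2 := (h1.fun_smul ((hode t ht).sub_const y)).sub_const (x₀ - y)
    refine (h2.congr_of_mem key ht).congr_deriv ?_
    rw [← smul_add, ← Matrix.mulVec_add, key t ht, sub_add_cancel, Matrix.mulVec_smul,
      Matrix.sub_mulVec, Matrix.one_mulVec]
    ext i
    simp only [Pi.smul_apply, Pi.sub_apply, Pi.add_apply, Pi.neg_apply, smul_eq_mul]
    field_simp
    ring
end

section
/- Let y, x₀ ∈ ℝ^{QN}, let P : [0,1) → ℝ^{QN×QN} be continuous, and let x̃ : [0,1) → ℝ^{QN} be differentiable with x̃(0) = x₀ and ∂_t x̃(t) = −(1/(1−t)) P(t)(x̃(t) − y) for all t ∈ [0,1). Let U(t,t') ∈ ℝ^{QN×QN} be the linear propagator determined by ∂_t U(t,t') = (1/(1−t))(I − P(t)) U(t,t') with U(t',t') = I, for t, t' ∈ [0,1). Then the deviation from linear interpolation satisfies, for all t ∈ [0,1): x̃(t) − ((1−t)x₀ + t y) = ∫₀ᵗ U(t,t') · ((1−t)/(1−t')) · (I − P(t'))(x₀ − y) dt'. -/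
open Matrix

attribute [local instance] Matrix.normedAddCommGroup Matrix.normedSpace

open Set in
theorem aux_unique {F : Type*} [NormedAddCommGroup F] [NormedSpace ℝ F]
    (B : ℝ → F →L[ℝ] F) (hB : ContinuousOn B (Ico 0 1)) (f g : ℝ → F)
    (hf : ∀ t ∈ Ico (0:ℝ) 1, HasDerivWithinAt f (B t (f t)) (Ico 0 1) t)
    (hg : ∀ t ∈ Ico (0:ℝ) 1, HasDerivWithinAt g (B t (g t)) (Ico 0 1) t)
    (s : ℝ) (hs : s ∈ Ico (0:ℝ) 1) (hfg : f s = g s) :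
    ∀ t ∈ Ico (0:ℝ) 1, f t = g t := by
  have key : ∀ a b : ℝ, 0 ≤ a → b < 1 → ∃ K : NNReal, ∀ t ∈ Icc a b,
      LipschitzOnWith K (fun x => B t x) (univ : Set F) := by
    intro a b ha hb
    have hsub : Icc a b ⊆ Ico 0 1 := fun x hx => ⟨ha.trans hx.1, hx.2.trans_lt hb⟩
    obtain ⟨C, hC⟩ := isCompact_Icc.exists_bound_of_continuousOn (hB.mono hsub)
    refine ⟨C.toNNReal, fun t ht => ?_⟩
    rw [lipschitzOnWith_univ]
    refine (B t).lipschitz.weaken ?_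
    rw [← NNReal.coe_le_coe]
    exact (hC t ht).trans (Real.le_coe_toNNReal C)
  have hcf : ContinuousOn f (Ico 0 1) := fun t ht => (hf t ht).continuousWithinAt
  have hcg : ContinuousOn g (Ico 0 1) := fun t ht => (hg t ht).continuousWithinAt
  intro t ht
  rcases le_total s t with h | h
  · obtain ⟨K, hK⟩ := key s t hs.1 ht.2
    have hsub : Icc s t ⊆ Ico 0 1 := fun x hx => ⟨hs.1.trans hx.1, hx.2.trans_lt ht.2⟩
    have hn : ∀ x ∈ Ico s t, Ico (0:ℝ) 1 ∈ nhdsWithin x (Ici x) := fun x hx =>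
      Filter.mem_of_superset (Ico_mem_nhdsGE (hx.2.trans ht.2))
        (fun z hz => ⟨(hs.1.trans hx.1).trans hz.1, hz.2⟩)
    exact ODE_solution_unique_of_mem_Icc_right (v := fun t x => B t x) (s := fun _ => univ) (K := K)
      (fun x hx => hK x (Ico_subset_Icc_self hx)) (hcf.mono hsub)
      (fun x hx => (hf x (hsub (Ico_subset_Icc_self hx))).mono_of_mem_nhdsWithin (hn x hx))
      (fun _ _ => mem_univ _) (hcg.mono hsub)
      (fun x hx => (hg x (hsub (Ico_subset_Icc_self hx))).mono_of_mem_nhdsWithin (hn x hx))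
      (fun _ _ => mem_univ _) hfg ⟨h, le_rfl⟩
  · obtain ⟨K, hK⟩ := key t s ht.1 hs.2
    have hsub : Icc t s ⊆ Ico 0 1 := fun x hx => ⟨ht.1.trans hx.1, hx.2.trans_lt hs.2⟩
    have hn : ∀ x ∈ Ioc t s, Ico (0:ℝ) 1 ∈ nhdsWithin x (Iic x) := fun x hx =>
      mem_nhdsWithin_of_mem_nhds (Ico_mem_nhds (ht.1.trans_lt hx.1) (hx.2.trans_lt hs.2))
    exact ODE_solution_unique_of_mem_Icc_left (v := fun t x => B t x) (s := fun _ => univ) (K := K)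
      (fun x hx => hK x (Ioc_subset_Icc_self hx)) (hcf.mono hsub)
      (fun x hx => (hf x (hsub (Ioc_subset_Icc_self hx))).mono_of_mem_nhdsWithin (hn x hx))
      (fun _ _ => mem_univ _) (hcg.mono hsub)
      (fun x hx => (hg x (hsub (Ioc_subset_Icc_self hx))).mono_of_mem_nhdsWithin (hn x hx))
      (fun _ _ => mem_univ _) hfg ⟨le_rfl, h⟩

open Set in
theorem aux_core {E : Type*} [NormedAddCommGroup E] [NormedSpace ℝ E] [CompleteSpace E]
    (a : ℝ → E →L[ℝ] E) (ha : ContinuousOn a (Ico 0 1)) (U : ℝ → ℝ → E →L[ℝ] E)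
    (hU0 : ∀ s ∈ Ico (0:ℝ) 1, U s s = 1)
    (hU : ∀ s ∈ Ico (0:ℝ) 1, ∀ t ∈ Ico (0:ℝ) 1,
      HasDerivWithinAt (fun τ => U τ s) (a t * U t s) (Ico 0 1) t)
    (w : ℝ → E) (hw : ∀ t ∈ Ico (0:ℝ) 1, HasDerivWithinAt w (a t (w t)) (Ico 0 1) t) :
    ∀ t ∈ Ico (0:ℝ) 1, w t - w 0 = ∫ s in (0:ℝ)..t, U t s (a s (w 0)) := by
  have h0 : (0:ℝ) ∈ Ico (0:ℝ) 1 := by simp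
  -- cocycle
  have hco : ∀ r ∈ Ico (0:ℝ) 1, ∀ s ∈ Ico (0:ℝ) 1, ∀ t ∈ Ico (0:ℝ) 1,
      U t s * U s r = U t r := by
    intro r hr s hs
    refine aux_unique (fun t => ContinuousLinearMap.mul ℝ (E →L[ℝ] E) (a t))
      ((ContinuousLinearMap.mul ℝ (E →L[ℝ] E)).continuous.comp_continuousOn ha)
      (fun t => U t s * U s r) (fun t => U t r) ?_ ?_ s hs (by simp [hU0 s hs])
    · intro t ht
      have := (hU s hs t ht).mul_const (U s r)
      simpa [mul_assoc] using this
    · intro t ht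
      simpa using hU r hr t ht
  have hwU : ∀ t ∈ Ico (0:ℝ) 1, w t = U t 0 (w 0) := by
    refine aux_unique a ha w (fun t => U t 0 (w 0)) hw ?_ 0 h0 (by simp [hU0 0 h0])
    intro t ht
    have := (hU 0 h0 t ht).clm_apply (hasDerivWithinAt_const t (Ico (0:ℝ) 1) (w 0))
    simpa using this
  have hinv1 : ∀ s ∈ Ico (0:ℝ) 1, U s 0 * U 0 s = 1 := fun s hs => by
    rw [hco s hs 0 h0 s hs, hU0 s hs]
  have hinv2 : ∀ s ∈ Ico (0:ℝ) 1, U 0 s * U s 0 = 1 := fun s hs => by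
    rw [hco 0 h0 s hs 0 h0, hU0 0 h0]
  have hW : ∀ s ∈ Ico (0:ℝ) 1, Ring.inverse (U s 0) = U 0 s := fun s hs =>
    Ring.inverse_unit (⟨U s 0, U 0 s, hinv1 s hs, hinv2 s hs⟩ : (E →L[ℝ] E)ˣ)
  have hdW : ∀ s ∈ Ico (0:ℝ) 1,
      HasDerivWithinAt (fun s => U 0 s) (-(U 0 s * a s)) (Ico 0 1) s := by
    intro s hs
    have h1 := hasFDerivAt_ringInverse (𝕜 := ℝ)
      (⟨U s 0, U 0 s, hinv1 s hs, hinv2 s hs⟩ : (E →L[ℝ] E)ˣ)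
    have h2 := HasFDerivAt.comp_hasDerivWithinAt (f := fun τ => U τ 0) s h1 (hU 0 h0 s hs)
    have h3 := h2.congr (f₁ := fun s => U 0 s) (fun x hx => (hW x hx).symm) (hW s hs).symm
    refine h3.congr_deriv ?_
    simp [mul_assoc, hinv1 s hs]
  intro t ht
  have hsub : Icc 0 t ⊆ Ico 0 1 := fun x hx => ⟨hx.1, hx.2.trans_lt ht.2⟩
  have hd : ∀ s ∈ Ico (0:ℝ) 1,
      HasDerivWithinAt (fun s => -(U t s (w 0))) (U t s (a s (w 0))) (Ico 0 1) s := by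
    intro s hs
    have h1 := ((hdW s hs).const_mul (U t 0)).congr (f₁ := fun s => U t s)
      (fun x hx => (hco x hx 0 h0 t ht).symm) (hco s hs 0 h0 t ht).symm
    have h2 := (h1.clm_apply (hasDerivWithinAt_const s (Ico (0:ℝ) 1) (w 0))).neg
    refine HasDerivWithinAt.congr_deriv (f := fun s => -(U t s (w 0))) h2 ?_
    rw [← hco s hs 0 h0 t ht]
    simp
  have hcU : ContinuousOn (fun s => U t s) (Icc 0 t) := by
    have : ContinuousOn (fun s => U t 0 * U 0 s) (Icc 0 t) :=
      continuousOn_const.mul (fun s hs => ((hdW s (hsub hs)).continuousWithinAt).mono hsub)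
    exact this.congr fun x hx => (hco x (hsub hx) 0 h0 t ht).symm
  rw [intervalIntegral.integral_eq_sub_of_hasDerivAt_of_le ht.1
    (f := fun s => -(U t s (w 0)))]
  · simp [hwU t ht, hU0 t ht]
    abel
  · exact fun s hs => ((hd s (hsub hs)).continuousWithinAt).mono hsub
  · intro s hs
    exact (hd s (hsub (Ioo_subset_Icc_self hs))).hasDerivAt
      (Ico_mem_nhds hs.1 (hs.2.trans ht.2))
  · apply ContinuousOn.intervalIntegrable
    rw [uIcc_of_le ht.1]
    exact hcU.clm_apply ((ha.mono hsub).clm_apply continuousOn_const)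

/-- Deviation from linear interpolation under rank loss: if x̃ solves
∂_t x̃ = −(1/(1−t)) P(t)(x̃(t) − y) with x̃(0) = x₀, and U(t,t') is the
propagator of ∂_t U(t,t') = (1/(1−t))(I − P(t)) U(t,t'), U(t',t') = I, then
x̃(t) − ((1−t)x₀ + t y) = ∫₀ᵗ U(t,t') ((1−t)/(1−t')) (I − P(t'))(x₀ − y) dt'. -/
theorem stmt_9 (d : ℕ) (y x₀ : Fin d → ℝ)
    (P : ℝ → Matrix (Fin d) (Fin d) ℝ) (hP : ContinuousOn P (Set.Ico 0 1))
    (xt : ℝ → Fin d → ℝ) (hx0 : xt 0 = x₀)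
    (hode : ∀ t ∈ Set.Ico (0 : ℝ) 1,
      HasDerivWithinAt xt (-((1 / (1 - t)) • (P t *ᵥ (xt t - y)))) (Set.Ico 0 1) t)
    (U : ℝ → ℝ → Matrix (Fin d) (Fin d) ℝ)
    (hU0 : ∀ t' ∈ Set.Ico (0 : ℝ) 1, U t' t' = 1)
    (hUode : ∀ t' ∈ Set.Ico (0 : ℝ) 1, ∀ t ∈ Set.Ico (0 : ℝ) 1,
      HasDerivWithinAt (fun τ => U τ t')
        ((1 / (1 - t)) • ((1 - P t) * U t t')) (Set.Ico 0 1) t) :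
    ∀ t ∈ Set.Ico (0 : ℝ) 1,
      xt t - ((1 - t) • x₀ + t • y) =
        ∫ t' in (0 : ℝ)..t,
          U t t' *ᵥ (((1 - t) / (1 - t')) • ((1 - P t') *ᵥ (x₀ - y))) := by
  let e : Matrix (Fin d) (Fin d) ℝ →ₗ[ℝ] ((Fin d → ℝ) →L[ℝ] (Fin d → ℝ)) :=
    (LinearMap.toContinuousLinearMap (𝕜 := ℝ) (E := Fin d → ℝ) (F' := Fin d → ℝ)).toLinearMap ∘ₗ
      (Matrix.toLin' (R := ℝ) (m := Fin d) (n := Fin d)).toLinearMap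
  let L : Matrix (Fin d) (Fin d) ℝ →L[ℝ] ((Fin d → ℝ) →L[ℝ] (Fin d → ℝ)) :=
    LinearMap.toContinuousLinearMap e
  have hL : ∀ M v, L M v = M *ᵥ v := fun M v => by
    simp [L, e]
  have hLmul : ∀ M N, L (M * N) = L M * L N := fun M N => by
    ext1 v
    rw [mul_apply_eq_comp]
    simp only [hL, Matrix.mulVec_mulVec]
  have hL1 : L 1 = 1 := by
    ext1 v
    simp only [hL, Matrix.one_mulVec, one_apply_eq_self]
  have hne : ∀ t ∈ Set.Ico (0:ℝ) 1, (1 - t) ≠ 0 := fun t ht => by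
    have := ht.2
    intro h
    linarith
  have hcore := aux_core (fun t => L ((1 / (1 - t)) • (1 - P t))) (by
      have h1 : ContinuousOn (fun t : ℝ => 1 / (1 - t)) (Set.Ico 0 1) :=
        continuousOn_const.div (continuousOn_const.sub continuousOn_id) hne
      have h2 : ContinuousOn (fun t : ℝ => 1 - P t) (Set.Ico 0 1) := continuousOn_const.sub hP
      have h3 : ContinuousOn (fun t : ℝ => (1 / (1 - t)) • (1 - P t)) (Set.Ico 0 1) := h1.smul h2
      exact L.continuous.comp_continuousOn h3)
    (fun t s => L (U t s)) (fun s hs => by rw [hU0 s hs, hL1])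
    (fun s hs t ht => by
      have := L.hasFDerivAt.comp_hasDerivWithinAt t (hUode s hs t ht)
      rw [← hLmul, Matrix.smul_mul]
      exact this)
    (fun t => (1 / (1 - t)) • (xt t - y)) (fun t ht => by
      have h1 : HasDerivWithinAt (fun t : ℝ => 1 / (1 - t)) (1 / (1 - t) ^ 2) (Set.Ico 0 1) t := by
        have := (((hasDerivAt_id t).const_sub 1).inv (hne t ht)).hasDerivWithinAt (s := Set.Ico 0 1)
        simpa [one_div] using! this
      have h2 := h1.smul ((hode t ht).sub_const y)
      refine HasDerivWithinAt.congr_deriv (f := fun t => (1 / (1 - t)) • (xt t - y)) h2 ?_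
      rw [hL, Matrix.smul_mulVec, Matrix.sub_mulVec, Matrix.one_mulVec, Matrix.mulVec_smul]
      ext i
      have := hne t ht
      simp
      field_simp
      ring)
  intro t ht
  have h := hcore t ht
  have hn := hne t ht
  have : xt t - ((1 - t) • x₀ + t • y) =
      (1 - t) • ((1 / (1 - t)) • (xt t - y) - (1 / (1 - (0:ℝ))) • (xt 0 - y)) := by
    rw [hx0]
    ext i
    simp
    field_simp
    ring
  rw [this]
  rw [h, ← intervalIntegral.integral_smul]
  congr 1
  ext1 s
  simp only [hL, hx0]
  simp [Matrix.smul_mulVec, Matrix.mulVec_smul, smul_smul, div_eq_mul_inv]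
end

section
/- Let Q ≥ 2, z ∈ ℝ^Q, and let H = diag(σ(z)) − σ(z) σ(z)ᵀ. If v ∈ ℝ^Q satisfies v · u_Q = 0 and v ≠ 0, then ⟨v, H v⟩ > 0. That is, the Hessian of the cross-entropy loss is positive-definite when restricted to directions tangent to the affine hyperplanes H_c = { z : z · u_Q = c }. -/
open Matrix Finset

/-- The softmax function on ℝ^Q. -/
noncomputable def softmax {Q : ℕ} (z : Fin Q → ℝ) : Fin Q → ℝ :=
  fun j => Real.exp (z j) / ∑ i, Real.exp (z i)

/-- The Hessian H = diag(σ(z)) − σ(z)σ(z)ᵀ of the cross-entropy loss is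
positive-definite on directions tangent to the hyperplanes { z : z ⬝ u_Q = c }:
if v ⬝ u_Q = 0 and v ≠ 0 then ⟨v, H v⟩ > 0. -/
theorem stmt_13 (Q : ℕ) (hQ : 2 ≤ Q) (z : Fin Q → ℝ)
    (H : Matrix (Fin Q) (Fin Q) ℝ)
    (hH : H = Matrix.diagonal (softmax z) - Matrix.vecMulVec (softmax z) (softmax z))
    (v : Fin Q → ℝ) (hv : v ⬝ᵥ (fun _ => (1 : ℝ)) = 0) (hv0 : v ≠ 0) :
    0 < v ⬝ᵥ (H *ᵥ v) := by
  subst hH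
  haveI : Nonempty (Fin Q) := ⟨⟨0, by omega⟩⟩
  have hS : 0 < ∑ i, Real.exp (z i) :=
    Finset.sum_pos (fun i _ => Real.exp_pos _) Finset.univ_nonempty
  have hpos : ∀ j, 0 < softmax z j := fun j => div_pos (Real.exp_pos _) hS
  have hsum : ∑ j, softmax z j = 1 := by
    simp only [softmax]
    rw [← Finset.sum_div]
    exact div_self hS.ne'
  generalize softmax z = s at hpos hsum
  have hv' : ∑ i, v i = 0 := by simpa [dotProduct] using hv
  obtain ⟨m, hm⟩ : ∃ m, m = ∑ i, s i * v i := ⟨_, rfl⟩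
  have key : v ⬝ᵥ ((Matrix.diagonal s - Matrix.vecMulVec s s) *ᵥ v)
      = ∑ i, s i * (v i - m) ^ 2 := by
    have h1 : ∀ i, ((Matrix.diagonal s - Matrix.vecMulVec s s) *ᵥ v) i
        = s i * v i - s i * m := by
      intro i
      rw [Matrix.sub_mulVec, Pi.sub_apply, Matrix.mulVec_diagonal, hm, Finset.mul_sum]
      simp [Matrix.mulVec, dotProduct, Matrix.vecMulVec_apply, mul_assoc]
    have h2 : ∑ i, s i * (v i - m) ^ 2
        = ∑ i, v i * (s i * v i - s i * m) - m * ∑ i, s i * v i + m ^ 2 * ∑ i, s i := by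
      rw [Finset.mul_sum, Finset.mul_sum, ← Finset.sum_sub_distrib, ← Finset.sum_add_distrib]
      exact Finset.sum_congr rfl fun i _ => by ring
    rw [h2, hsum, ← hm]
    simp only [dotProduct, h1]
    ring
  rw [key]
  have hne : ∃ i, v i ≠ m := by
    by_contra! h
    have hm0 : m = 0 := by
      simp only [h, Finset.sum_const, Finset.card_univ, Fintype.card_fin, nsmul_eq_mul] at hv'
      rcases mul_eq_zero.1 hv' with h0 | h0
      · have : Q = 0 := by exact_mod_cast h0
        omega
      · exact h0
    exact hv0 (funext fun i => by simp [h i, hm0])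
  obtain ⟨i, hi⟩ := hne
  have hi' : 0 < (v i - m) ^ 2 := by
    have := sub_ne_zero.2 hi
    positivity
  exact Finset.sum_pos' (fun j _ => mul_nonneg (hpos j).le (sq_nonneg _))
    ⟨i, Finset.mem_univ _, mul_pos (hpos i) hi'⟩
end

section
/- Let Q ≥ 1, let y ∈ ℝ^Q have all components positive with Σ_{j=1}^Q y_j = 1, and let f : [0,∞) → ℝ^Q be differentiable with f'(t) = y − σ(f(t)) for all t ≥ 0. Set c := Σ_{j=1}^Q f(0)_j and define f_{*,c} ∈ ℝ^Q by (f_{*,c})_j = log y_j + (1/Q)(c − Σ_{i=1}^Q log y_i) = log y_j + (1/Q) Σ_{i=1}^Q (f(0)_i − log y_i). Then f(t) → f_{*,c} as t → ∞. -/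
open Finset Filter

lemma aux_mono (h h' : ℝ → ℝ)
    (hd : ∀ t ∈ Set.Ici (0 : ℝ), HasDerivWithinAt h (h' t) (Set.Ici 0) t)
    (hn : ∀ t ∈ Set.Ici (0 : ℝ), h' t ≤ 0) : ∀ t, 0 ≤ t → h t ≤ h 0 := by
  intro t ht
  have hanti : AntitoneOn h (Set.Ici 0) := by
    apply antitoneOn_of_hasDerivWithinAt_nonpos (f' := h') (convex_Ici 0)
    · exact fun x hx => (hd x hx).continuousWithinAt
    · intro x hx
      exact (hd x (interior_subset hx)).mono interior_subset
    · intro x hx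
      exact hn x (interior_subset hx)
  exact hanti (by simp) ht ht

lemma aux_exp (K x : ℝ) (hK : 0 ≤ K) (hx : -K ≤ x) :
    Real.exp (-K) * x ^ 2 ≤ x * (Real.exp x - 1) := by
  have hK1 : Real.exp (-K) ≤ 1 := Real.exp_le_one_iff.2 (by linarith)
  rcases le_total 0 x with h | h
  · have h1 := Real.add_one_le_exp x
    nlinarith [sq_nonneg x]
  · have h1 := Real.add_one_le_exp (-x)
    have h2 : Real.exp (-K) ≤ Real.exp x := Real.exp_le_exp.2 hx
    have h3 : Real.exp x * Real.exp (-x) = 1 := by rw [← Real.exp_add]; simp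
    have h4 : Real.exp x * (-x) ≤ 1 - Real.exp x := by
      nlinarith [Real.exp_pos x]
    have h5 : Real.exp x * (-x) * (-x) ≤ (1 - Real.exp x) * (-x) :=
      mul_le_mul_of_nonneg_right h4 (by linarith)
    nlinarith [mul_le_mul_of_nonneg_right h2 (sq_nonneg x)]

lemma aux_key {Q : ℕ} (y g : Fin Q → ℝ) (m R : ℝ)
    (hm : 0 ≤ m) (hmy : ∀ j, m ≤ y j) (hypos : ∀ j, 0 < y j) (hy : ∑ j, y j = 1)
    (hg : ∑ j, g j = 0) (hR0 : 0 ≤ R) (hR : ∀ j, |g j| ≤ R) :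
    m * Real.exp (-(2 * R)) * ∑ j, g j ^ 2 ≤
      ∑ j, g j * (y j * Real.exp (g j) / (∑ i, y i * Real.exp (g i)) - y j) := by
  set S := ∑ i, y i * Real.exp (g i) with hS
  have hne : (Finset.univ : Finset (Fin Q)).Nonempty := by
    by_contra h
    rw [Finset.not_nonempty_iff_eq_empty] at h
    rw [h] at hy; simp at hy
  have hSpos : 0 < S := Finset.sum_pos (fun i _ => mul_pos (hypos i) (Real.exp_pos _)) hne
  have hSle : S ≤ Real.exp R := by
    calc S ≤ ∑ i, y i * Real.exp R := by
          apply Finset.sum_le_sum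
          intro i _
          exact mul_le_mul_of_nonneg_left (Real.exp_le_exp.2 (abs_le.1 (hR i)).2) (hypos i).le
      _ = Real.exp R := by rw [← Finset.sum_mul, hy, one_mul]
  set L := Real.log S with hL
  have hLR : L ≤ R := by
    rw [hL, Real.log_le_iff_le_exp hSpos]; exact hSle
  have hexpL : Real.exp L = S := Real.exp_log hSpos
  have h0 : ∑ j, (y j * Real.exp (g j) / S - y j) = 0 := by
    rw [Finset.sum_sub_distrib, ← Finset.sum_div, ← hS, div_self hSpos.ne', hy, sub_self]
  have h1 : ∑ j, g j * (y j * Real.exp (g j) / S - y j)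
      = ∑ j, y j * ((g j - L) * (Real.exp (g j - L) - 1)) := by
    have : ∑ j, g j * (y j * Real.exp (g j) / S - y j)
        = ∑ j, g j * (y j * Real.exp (g j) / S - y j)
          - L * ∑ j, (y j * Real.exp (g j) / S - y j) := by rw [h0]; ring
    rw [this, Finset.mul_sum, ← Finset.sum_sub_distrib]
    apply Finset.sum_congr rfl
    intro j _
    rw [Real.exp_sub, hexpL]; ring
  rw [h1]
  have h2 : ∑ j, g j ^ 2 ≤ ∑ j, (g j - L) ^ 2 := by
    have : ∑ j, (g j - L) ^ 2 = ∑ j, g j ^ 2 - 2 * L * ∑ j, g j + ∑ j : Fin Q, L ^ 2 := by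
      rw [Finset.mul_sum, ← Finset.sum_sub_distrib, ← Finset.sum_add_distrib]
      apply Finset.sum_congr rfl
      intro j _; ring
    rw [this, hg]
    have : 0 ≤ ∑ j : Fin Q, L ^ 2 := Finset.sum_nonneg (fun _ _ => sq_nonneg _)
    linarith
  calc m * Real.exp (-(2 * R)) * ∑ j, g j ^ 2
      ≤ m * Real.exp (-(2 * R)) * ∑ j, (g j - L) ^ 2 :=
        mul_le_mul_of_nonneg_left h2 (mul_nonneg hm (Real.exp_pos _).le)
    _ ≤ _ := by
        rw [Finset.mul_sum]
        apply Finset.sum_le_sum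
        intro j _
        have h3 := aux_exp (2 * R) (g j - L) (by linarith)
          (by have := (abs_le.1 (hR j)).1; linarith)
        have h4 : 0 ≤ Real.exp (-(2 * R)) * (g j - L) ^ 2 := by positivity
        calc m * Real.exp (-(2 * R)) * (g j - L) ^ 2
            = m * (Real.exp (-(2 * R)) * (g j - L) ^ 2) := by ring
          _ ≤ y j * (Real.exp (-(2 * R)) * (g j - L) ^ 2) :=
            mul_le_mul_of_nonneg_right (hmy j) h4
          _ ≤ _ := mul_le_mul_of_nonneg_left h3 (hypos j).le

/-- Convergence of the cross-entropy gradient flow: if f' = y − σ(f) and the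
label y has positive components summing to one, then f(t) converges as t → ∞
to f_{*,c} with (f_{*,c})ⱼ = log yⱼ + (1/Q) Σᵢ (f(0)ᵢ − log yᵢ), where
c = Σⱼ f(0)ⱼ. -/
theorem stmt_16 (Q : ℕ) (hQ : 1 ≤ Q) (y : Fin Q → ℝ)
    (hypos : ∀ j, 0 < y j) (hy : ∑ j, y j = 1)
    (f : ℝ → Fin Q → ℝ)
    (hode : ∀ t ∈ Set.Ici (0 : ℝ),
      HasDerivWithinAt f (y - softmax (f t)) (Set.Ici 0) t)
    (fstarc : Fin Q → ℝ)
    (hfstarc : ∀ j, fstarc j =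
      Real.log (y j) + (1 / Q) * ∑ i, (f 0 i - Real.log (y i))) :
    Tendsto f atTop (nhds fstarc) := by
  have hne : (Finset.univ : Finset (Fin Q)).Nonempty := ⟨⟨0, hQ⟩, Finset.mem_univ _⟩
  have hQ0 : (Q : ℝ) ≠ 0 := by
    have : Q ≠ 0 := by omega
    exact_mod_cast this
  have hd : ∀ j, ∀ t ∈ Set.Ici (0 : ℝ),
      HasDerivWithinAt (fun s => f s j) (y j - softmax (f t) j) (Set.Ici 0) t := by
    intro j t ht
    exact (hasDerivWithinAt_pi.1 (hode t ht)) j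
  have hsm : ∀ z : Fin Q → ℝ, ∑ j, softmax z j = 1 := by
    intro z
    unfold softmax
    rw [← Finset.sum_div, div_self]
    exact (Finset.sum_pos (fun i _ => Real.exp_pos _) hne).ne'
  have hdz : ∀ t, ∑ j, (y j - softmax (f t) j) = 0 := by
    intro t
    rw [Finset.sum_sub_distrib, hy, hsm, sub_self]
  have hds : ∀ t ∈ Set.Ici (0 : ℝ),
      HasDerivWithinAt (fun s => ∑ j, f s j) 0 (Set.Ici 0) t := by
    intro t ht
    have := HasDerivWithinAt.fun_sum (u := Finset.univ) (fun j _ => hd j t ht)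
    rwa [hdz t] at this
  have hsum : ∀ t, 0 ≤ t → ∑ j, f t j = ∑ j, f 0 j := by
    intro t ht
    have h1 := aux_mono _ (fun _ => 0) hds (by simp) t ht
    have h2 := aux_mono (fun s => -∑ j, f s j) (fun _ => 0)
      (fun t ht => by simpa using (hds t ht).fun_neg) (by simp) t ht
    linarith
  have hsumstar : ∑ j, fstarc j = ∑ j, f 0 j := by
    simp_rw [hfstarc]
    rw [Finset.sum_add_distrib, Finset.sum_const, Finset.card_univ, Fintype.card_fin,
      nsmul_eq_mul, Finset.sum_sub_distrib]
    field_simp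
    ring
  have hg0 : ∀ t, 0 ≤ t → ∑ j, (f t j - fstarc j) = 0 := by
    intro t ht
    rw [Finset.sum_sub_distrib, hsum t ht, hsumstar, sub_self]
  have hsoft : ∀ t j, softmax (f t) j =
      y j * Real.exp (f t j - fstarc j) / ∑ i, y i * Real.exp (f t i - fstarc i) := by
    intro t j
    set C := (1 / (Q : ℝ)) * ∑ i, (f 0 i - Real.log (y i)) with hC
    have h1 : ∀ i, y i * Real.exp (f t i - fstarc i) = Real.exp (f t i) * Real.exp (-C) := by
      intro i
      rw [hfstarc i]
      nth_rewrite 1 [← Real.exp_log (hypos i)]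
      rw [← Real.exp_add, ← Real.exp_add]
      congr 1; ring
    simp_rw [h1]
    rw [← Finset.sum_mul, mul_div_mul_right _ _ (Real.exp_pos _).ne']
    rfl
  obtain ⟨j0, -, hj0⟩ := Finset.exists_min_image Finset.univ y hne
  set V : ℝ → ℝ := fun t => ∑ j, (f t j - fstarc j) ^ 2 with hV
  set W : ℝ → ℝ := fun t => ∑ j, (f t j - fstarc j) * (softmax (f t) j - y j) with hW
  have hVd : ∀ t ∈ Set.Ici (0 : ℝ), HasDerivWithinAt V (-2 * W t) (Set.Ici 0) t := by
    intro t ht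
    have := HasDerivWithinAt.fun_sum (u := Finset.univ)
      (fun j _ => ((hd j t ht).sub_const (fstarc j)).fun_pow 2)
    refine this.congr_deriv ?_
    simp only [hW]
    rw [Finset.mul_sum]
    apply Finset.sum_congr rfl
    intro j _
    simp; ring
  have key : ∀ t, 0 ≤ t → ∀ R, 0 ≤ R → (∀ j, |f t j - fstarc j| ≤ R) →
      y j0 * Real.exp (-(2 * R)) * V t ≤ W t := by
    intro t ht R hR0 hR
    have := aux_key y (fun j => f t j - fstarc j) (y j0) R (hypos j0).le
      (fun j => hj0 j (Finset.mem_univ _)) hypos hy (hg0 t ht) hR0 hR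
    simp only [hW, hV, hsoft]
    exact this
  have hVnn : ∀ t, 0 ≤ V t := fun t => Finset.sum_nonneg (fun _ _ => sq_nonneg _)
  have habs : ∀ t j, |f t j - fstarc j| ≤ Real.sqrt (V t) := by
    intro t j
    apply Real.abs_le_sqrt
    exact Finset.single_le_sum (f := fun j => (f t j - fstarc j) ^ 2)
      (fun _ _ => sq_nonneg _) (Finset.mem_univ j)
  have hWnn : ∀ t, 0 ≤ t → 0 ≤ W t := by
    intro t ht
    refine le_trans ?_ (key t ht _ (Real.sqrt_nonneg _) (habs t))
    exact mul_nonneg (mul_nonneg (hypos j0).le (Real.exp_pos _).le) (hVnn t)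
  have hVle : ∀ t, 0 ≤ t → V t ≤ V 0 :=
    aux_mono V _ hVd (fun t ht => by have := hWnn t ht; linarith)
  set R := Real.sqrt (V 0) with hR
  set κ := y j0 * Real.exp (-(2 * R)) with hκ
  have hκpos : 0 < κ := mul_pos (hypos j0) (Real.exp_pos _)
  have hdec : ∀ t, 0 ≤ t → κ * V t ≤ W t := fun t ht =>
    key t ht R (Real.sqrt_nonneg _)
      (fun j => (habs t j).trans (Real.sqrt_le_sqrt (hVle t ht)))
  have hexp : ∀ t, 0 ≤ t → V t * Real.exp (κ * t) ≤ V 0 := by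
    intro t ht
    have := aux_mono (fun t => V t * Real.exp (κ * t))
      (fun t => -2 * W t * Real.exp (κ * t) + V t * (Real.exp (κ * t) * (κ * 1)))
      (fun t ht => (hVd t ht).fun_mul
        ((((hasDerivAt_id t).const_mul κ).exp).hasDerivWithinAt))
      (fun t ht => by
        have h1 := hdec t ht
        have h2 := hWnn t ht
        have h3 := Real.exp_pos (κ * t)
        have h4 : (-2 * W t + κ * V t) * Real.exp (κ * t) ≤ 0 :=
          mul_nonpos_of_nonpos_of_nonneg (by linarith) h3.le
        linarith) t ht
    simpa using this
  have hVlim : Tendsto V atTop (nhds 0) := by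
    have hb : Tendsto (fun t => V 0 * Real.exp (-(κ * t))) atTop (nhds 0) := by
      have : Tendsto (fun t : ℝ => κ * t) atTop atTop := tendsto_id.const_mul_atTop hκpos
      simpa using (Real.tendsto_exp_neg_atTop_nhds_zero.comp this).const_mul (V 0)
    refine squeeze_zero' (Eventually.of_forall hVnn) ?_ hb
    filter_upwards [eventually_ge_atTop 0] with t ht
    rw [Real.exp_neg, ← div_eq_mul_inv, le_div_iff₀ (Real.exp_pos _)]
    exact hexp t ht
  rw [tendsto_pi_nhds]
  intro j
  rw [tendsto_iff_norm_sub_tendsto_zero]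
  have hs : Tendsto (fun t => Real.sqrt (V t)) atTop (nhds 0) := by
    simpa using hVlim.sqrt
  exact squeeze_zero (fun _ => norm_nonneg _) (fun t => habs t j) hs
end

section
/- Let Q, N ≥ 1, for each n = 1,…,N let y_n ∈ ℝ^Q have all components positive with Σ_{j=1}^Q (y_n)_j = 1, and let f_n : [0,∞) → ℝ^Q be differentiable with f_n'(t) = y_n − σ(f_n(t)) for all t ≥ 0. Then: (i) for each n, Σ_{j=1}^Q f_n(t)_j = c_n := Σ_{j=1}^Q f_n(0)_j for all t ≥ 0, so the concatenated trajectory x(t) = (f_1(t)ᵀ,…,f_N(t)ᵀ)ᵀ ∈ ℝ^{QN} is constrained to the product of affine hyperplanes H_{c_1} × ⋯ × H_{c_N}; and (ii) x(t) converges as t → ∞ to the point x*(C) = (f_{*,c_1}ᵀ,…,f_{*,c_N}ᵀ)ᵀ, where (f_{*,c_n})_j = log (y_n)_j + (1/Q)(c_n − Σ_{i=1}^Q log (y_n)_i). -/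
open Finset Filter

lemma aux_anti (V V' : ℝ → ℝ)
    (h : ∀ t ∈ Set.Ici (0:ℝ), HasDerivWithinAt V (V' t) (Set.Ici 0) t)
    (hn : ∀ t ∈ Set.Ici (0:ℝ), V' t ≤ 0) : ∀ t ∈ Set.Ici (0:ℝ), V t ≤ V 0 := by
  intro t ht
  have hA : AntitoneOn V (Set.Ici 0) := by
    apply antitoneOn_of_hasDerivWithinAt_nonpos (f' := V') (convex_Ici 0)
    · intro s hs
      exact (h s hs).continuousWithinAt
    · intro s hs
      exact (h s (interior_subset hs)).mono interior_subset
    · intro s hs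
      exact hn s (interior_subset hs)
  exact hA Set.self_mem_Ici ht ht

lemma aux_exp_s17 (h R : ℝ) (hR : 0 ≤ R) (hh : -R ≤ h) :
    Real.exp (-R) * h ^ 2 ≤ h * (Real.exp h - 1) := by
  have h1 : Real.exp (-R) ≤ 1 := Real.exp_le_one_iff.2 (by linarith)
  rcases le_total 0 h with h0 | h0
  · have h2 := Real.add_one_le_exp h
    nlinarith [sq_nonneg h]
  · have h2 := Real.add_one_le_exp (-h)
    have h3 : Real.exp (-R) ≤ Real.exp h := Real.exp_le_exp.2 hh
    have h4 : Real.exp h * Real.exp (-h) = 1 := by rw [← Real.exp_add]; simp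
    have h5 : -h * Real.exp h ≤ 1 - Real.exp h := by nlinarith [Real.exp_pos h]
    nlinarith [sq_nonneg h]

lemma aux_alg {Q : ℕ} (y g : Fin Q → ℝ) (m M : ℝ) (hm : 0 ≤ m) (hM : 0 ≤ M)
    (hmy : ∀ j, m ≤ y j) (hy : ∑ j, y j = 1) (hg : ∑ j, g j = 0)
    (hl : ∀ j, -M ≤ g j) (hu : ∀ j, g j ≤ M)  :
    ∑ j, g j * (y j - y j * Real.exp (g j) / ∑ i, y i * Real.exp (g i))
      ≤ -(m * Real.exp (-(2*M))) * ∑ j, g j ^ 2 := by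
  set Z := ∑ i, y i * Real.exp (g i) with hZ
  have hZl : Real.exp (-M) ≤ Z := by
    calc Real.exp (-M) = ∑ i, y i * Real.exp (-M) := by rw [← Finset.sum_mul, hy, one_mul]
      _ ≤ Z := Finset.sum_le_sum fun i _ =>
        mul_le_mul_of_nonneg_left (Real.exp_le_exp.2 (hl i)) (hm.trans (hmy i))
  have hZu : Z ≤ Real.exp M := by
    calc Z ≤ ∑ i, y i * Real.exp M := Finset.sum_le_sum fun i _ =>
          mul_le_mul_of_nonneg_left (Real.exp_le_exp.2 (hu i)) (hm.trans (hmy i))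
      _ = _ := by rw [← Finset.sum_mul, hy, one_mul]
  have hZ0 : 0 < Z := (Real.exp_pos _).trans_le hZl
  obtain ⟨w, hw⟩ : ∃ w, Real.exp w = Z := ⟨Real.log Z, Real.exp_log hZ0⟩
  have hwM : w ≤ M := by rw [← hw] at hZu; exact Real.exp_le_exp.1 hZu
  have hs : ∑ j, (y j - y j * Real.exp (g j) / Z) = 0 := by
    rw [Finset.sum_sub_distrib, ← Finset.sum_div, ← hZ, hy, div_self hZ0.ne', sub_self]
  have e1 : ∑ j, g j * (y j - y j * Real.exp (g j) / Z)
      = ∑ j, -(y j * ((g j - w) * (Real.exp (g j - w) - 1))) := by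
    have : ∑ j, w * (y j - y j * Real.exp (g j) / Z) = 0 := by
      rw [← Finset.mul_sum, hs, mul_zero]
    rw [← sub_zero (∑ j, g j * (y j - y j * Real.exp (g j) / Z)), ← this,
      ← Finset.sum_sub_distrib]
    refine Finset.sum_congr rfl fun j _ => ?_
    rw [Real.exp_sub, hw]
    ring
  rw [e1]
  have e2 : ∑ j, -(y j * ((g j - w) * (Real.exp (g j - w) - 1)))
      ≤ ∑ j, -(m * Real.exp (-(2*M))) * (g j - w)^2 := by
    refine Finset.sum_le_sum fun j _ => ?_
    have h1 := aux_exp_s17 (g j - w) (2*M) (by linarith) (by linarith [hl j])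
    have h0 : 0 ≤ Real.exp (-(2*M)) * (g j - w)^2 := by positivity
    have h2 := mul_le_mul (hmy j) h1 h0 (hm.trans (hmy j))
    linarith
  refine e2.trans ?_
  rw [← Finset.mul_sum]
  have e3 : ∑ j, g j ^ 2 ≤ ∑ j, (g j - w)^2 := by
    have : ∑ j, (g j - w)^2 = ∑ j, g j ^ 2 - 2 * w * ∑ j, g j + ∑ _j : Fin Q, w^2 := by
      rw [Finset.mul_sum, ← Finset.sum_sub_distrib, ← Finset.sum_add_distrib]
      exact Finset.sum_congr rfl fun j _ => by ring
    rw [this, hg]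
    have : 0 ≤ ∑ _j : Fin Q, w^2 := Finset.sum_nonneg fun _ _ => sq_nonneg w
    linarith
  have : 0 ≤ m * Real.exp (-(2*M)) := by positivity
  nlinarith

lemma aux_main {Q : ℕ} (hQ : 1 ≤ Q) (y : Fin Q → ℝ)
    (hypos : ∀ j, 0 < y j) (hy : ∑ j, y j = 1) (f : ℝ → Fin Q → ℝ)
    (hode : ∀ t ∈ Set.Ici (0 : ℝ),
      HasDerivWithinAt f (y - softmax (f t)) (Set.Ici 0) t)
    (c : ℝ) (hc : c = ∑ j, f 0 j)
    (x : Fin Q → ℝ)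
    (hx : ∀ j, x j =
      Real.log (y j) + (1 / Q) * (c - ∑ i, Real.log (y i))) :
    (∀ t ∈ Set.Ici (0 : ℝ), ∑ j, f t j = c) ∧ Tendsto f atTop (nhds x) := by
  have hd : ∀ t ∈ Set.Ici (0 : ℝ), ∀ j,
      HasDerivWithinAt (fun t => f t j) (y j - softmax (f t) j) (Set.Ici 0) t :=
    fun t ht j => (hasDerivWithinAt_pi.1 (hode t ht)) j
  have : Nonempty (Fin Q) := ⟨⟨0, hQ⟩⟩
  have hS : ∀ t, ∑ j, (y j - softmax (f t) j) = 0 := by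
    intro t
    have h0 : 0 < ∑ i, Real.exp (f t i) :=
      Finset.sum_pos (fun i _ => Real.exp_pos _) Finset.univ_nonempty
    simp only [softmax]
    rw [Finset.sum_sub_distrib, ← Finset.sum_div, hy, div_self h0.ne', sub_self]
  have hsum : ∀ t ∈ Set.Ici (0 : ℝ), ∑ j, f t j = c := by
    have hD : ∀ t ∈ Set.Ici (0 : ℝ),
        HasDerivWithinAt (fun t => ∑ j, f t j) 0 (Set.Ici 0) t := by
      intro t ht
      exact (HasDerivWithinAt.fun_sum fun j _ => hd t ht j).congr_deriv (hS t)
    intro t ht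
    have h1 := aux_anti (fun t => ∑ j, f t j) (fun _ => 0) hD (fun _ _ => le_rfl) t ht
    have h2 := aux_anti (fun t => -∑ j, f t j) (fun _ => 0)
      (fun t ht => by simpa using (hD t ht).fun_neg) (fun _ _ => le_rfl) t ht
    linarith
  refine ⟨hsum, ?_⟩
  have hQ0 : (Q : ℝ) ≠ 0 := by positivity
  have hxs : ∑ j, x j = c := by
    simp only [hx, Finset.sum_add_distrib, Finset.sum_const, Finset.card_univ, Fintype.card_fin,
      nsmul_eq_mul]
    field_simp
    ring
  have hg0 : ∀ t ∈ Set.Ici (0 : ℝ), ∑ j, (f t j - x j) = 0 := by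
    intro t ht
    rw [Finset.sum_sub_distrib, hsum t ht, hxs, sub_self]
  obtain ⟨a, ha⟩ : ∃ a, a = (1 / Q : ℝ) * (c - ∑ i, Real.log (y i)) := ⟨_, rfl⟩
  have hsm : ∀ t j, softmax (f t) j
      = y j * Real.exp (f t j - x j) / ∑ i, y i * Real.exp (f t i - x i) := by
    intro t j
    have : ∀ i, y i * Real.exp (f t i - x i) = Real.exp (f t i) * Real.exp (-a) := by
      intro i
      rw [hx i, ← ha, sub_eq_add_neg, neg_add, Real.exp_add, Real.exp_add, Real.exp_neg (Real.log _),
        Real.exp_log (hypos i)]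
      have := (hypos i).ne'
      field_simp
    simp only [this, softmax]
    rw [← Finset.sum_mul, mul_div_mul_right _ _ (Real.exp_pos _).ne']
  obtain ⟨j0, -, hj0⟩ := Finset.exists_min_image Finset.univ y Finset.univ_nonempty
  set V : ℝ → ℝ := fun t => ∑ j, (f t j - x j)^2 with hV
  set V' : ℝ → ℝ := fun t => 2 * ∑ j, (f t j - x j) * (y j - softmax (f t) j) with hV'
  have hVd : ∀ t ∈ Set.Ici (0:ℝ), HasDerivWithinAt V (V' t) (Set.Ici 0) t := by
    intro t ht
    simp only [hV', Finset.mul_sum]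
    refine HasDerivWithinAt.fun_sum fun j _ => ?_
    refine (((hd t ht j).sub_const (x j)).fun_pow 2).congr_deriv ?_
    norm_num
    ring
  have hcoord : ∀ t j, |f t j - x j| ≤ √(V t) := by
    intro t j
    apply Real.abs_le_sqrt
    exact Finset.single_le_sum (f := fun j => (f t j - x j)^2) (fun _ _ => sq_nonneg _)
      (Finset.mem_univ j)
  have hV0 : ∀ t, 0 ≤ V t := fun t => Finset.sum_nonneg fun _ _ => sq_nonneg _
  have key : ∀ M, 0 ≤ M → ∀ t ∈ Set.Ici (0:ℝ), √(V t) ≤ M →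
      V' t ≤ -(2 * (y j0 * Real.exp (-(2*M)))) * V t := by
    intro M hM t ht hMt
    have := aux_alg y (fun j => f t j - x j) (y j0) M (hypos j0).le hM
      (fun j => hj0 j (Finset.mem_univ j)) hy (hg0 t ht)
      (fun j => (abs_le.1 ((hcoord t j).trans hMt)).1)
      (fun j => (abs_le.1 ((hcoord t j).trans hMt)).2)
    simp only [hV', hsm, hV]
    linarith
  have hVle : ∀ t ∈ Set.Ici (0:ℝ), V t ≤ V 0 := by
    refine aux_anti V V' hVd fun t ht => (key _ (Real.sqrt_nonneg _) t ht le_rfl).trans ?_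
    have h1 : 0 ≤ (2 * (y j0 * Real.exp (-(2*√(V t))))) * V t :=
      mul_nonneg (mul_nonneg zero_le_two (mul_nonneg (hypos j0).le (Real.exp_pos _).le)) (hV0 t)
    linarith
  obtain ⟨k, hk⟩ : ∃ k, k = 2 * (y j0 * Real.exp (-(2*√(V 0)))) := ⟨_, rfl⟩
  have hkpos : 0 < k := by
    rw [hk]; exact mul_pos two_pos (mul_pos (hypos j0) (Real.exp_pos _))
  have hdec : ∀ t ∈ Set.Ici (0:ℝ), V t ≤ V 0 * Real.exp (-(k * t)) := by
    intro t ht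
    have := aux_anti (fun t => V t * Real.exp (k * t))
      (fun t => V' t * Real.exp (k*t) + V t * (Real.exp (k*t) * k))
      (fun t ht => by
        refine (hVd t ht).fun_mul ?_
        have := ((hasDerivAt_id t).const_mul k).exp
        simpa using this.hasDerivWithinAt)
      (fun t ht => by
        have h1 := key _ (Real.sqrt_nonneg (V 0)) t ht (Real.sqrt_le_sqrt (hVle t ht))
        rw [← hk] at h1
        have := Real.exp_pos (k*t)
        nlinarith) t ht
    simp only [mul_zero, Real.exp_zero, mul_one] at this
    rw [Real.exp_neg, ← div_eq_mul_inv, le_div_iff₀ (Real.exp_pos _)]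
    exact this
  have hexp : Tendsto (fun t => V 0 * Real.exp (-(k * t))) atTop (nhds 0) := by
    have : Tendsto (fun t => Real.exp (-(k * t))) atTop (nhds 0) :=
      Real.tendsto_exp_neg_atTop_nhds_zero.comp (tendsto_id.const_mul_atTop hkpos)
    simpa using this.const_mul (V 0)
  have hVt : Tendsto V atTop (nhds 0) :=
    tendsto_of_tendsto_of_tendsto_of_le_of_le' tendsto_const_nhds hexp
      (Eventually.of_forall hV0)
      ((eventually_ge_atTop 0).mono fun t ht => hdec t ht)
  have hsq : Tendsto (fun t => √(V t)) atTop (nhds 0) := by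
    simpa using hVt.sqrt
  rw [tendsto_pi_nhds]
  intro j
  rw [tendsto_iff_norm_sub_tendsto_zero]
  exact squeeze_zero (fun _ => norm_nonneg _) (fun t => hcoord t j) hsq

/-- Decoupled cross-entropy flows for N data points: (i) each coordinate sum
Σⱼ fₙ(t)ⱼ is conserved, so the concatenated trajectory stays in the product of
affine hyperplanes H_{c₁} × ⋯ × H_{c_N}; (ii) the concatenated trajectory
converges as t → ∞ to x*(C) whose n-th block is f_{*,cₙ} with
(f_{*,cₙ})ⱼ = log (yₙ)ⱼ + (1/Q)(cₙ − Σᵢ log (yₙ)ᵢ). -/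
theorem stmt_17 (Q N : ℕ) (hQ : 1 ≤ Q) (hN : 1 ≤ N)
    (y : Fin N → Fin Q → ℝ)
    (hypos : ∀ n j, 0 < y n j) (hy : ∀ n, ∑ j, y n j = 1)
    (f : Fin N → ℝ → Fin Q → ℝ)
    (hode : ∀ n, ∀ t ∈ Set.Ici (0 : ℝ),
      HasDerivWithinAt (f n) (y n - softmax (f n t)) (Set.Ici 0) t)
    (c : Fin N → ℝ) (hc : ∀ n, c n = ∑ j, f n 0 j)
    (xstar : Fin N → Fin Q → ℝ)
    (hxstar : ∀ n j, xstar n j =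
      Real.log (y n j) + (1 / Q) * (c n - ∑ i, Real.log (y n i))) :
    (∀ n, ∀ t ∈ Set.Ici (0 : ℝ), ∑ j, f n t j = c n) ∧
    Tendsto (fun t => (fun n => f n t)) atTop (nhds xstar) := by
  have H := fun n => aux_main hQ (y n) (hypos n) (hy n) (f n) (hode n) (c n) (hc n) (xstar n)
    (hxstar n)
  exact ⟨fun n => (H n).1, tendsto_pi_nhds.2 fun n => (H n).2⟩
end
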